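/- arXiv:2303.17172 — 3 statements merged into one kernel-verified Lean document; each statement's English description precedes it below -/
import Mathlib

section
/- Let 0 ≤ l ≤ r be integers and let M be a q^r-divisible multiset of points in PG(v-1,q) of cardinality n = q^l·[r+1-l]_q. Then there exists an (r+1-l)-dimensional subspace K such that M = q^l·χ_K, i.e., M(P) = q^l for every point P in K and M(P) = 0 otherwise. -/
open scoped Classical

noncomputable def MVal {F V : Type*} [Field F] [AddCommGroup V] [Module F V]
    (M : Projectivization F V → ℕ) (K : Submodule F V) : ℕ :=
  ∑ᶠ P ∈ {P : Projectivization F V | P.submodule ≤ K}, M P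

def IsDivisible {F V : Type*} [Field F] [AddCommGroup V] [Module F V] (Δ : ℕ)
    (M : Projectivization F V → ℕ) : Prop :=
  ∀ H : Submodule F V, Module.finrank F H + 1 = Module.finrank F V →
    MVal M H ≡ MVal M ⊤ [MOD Δ]

def IsSpanning {F V : Type*} [Field F] [AddCommGroup V] [Module F V]
    (M : Projectivization F V → ℕ) : Prop :=
  (⨆ P ∈ {P : Projectivization F V | 0 < M P}, P.submodule) = ⊤

def gaussNum (q k : ℕ) : ℕ := ∑ i ∈ Finset.range k, q ^ i

def IsProjBase {F V : Type*} [Field F] [AddCommGroup V] [Module F V]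
    (n : ℕ) (B : Finset (Projectivization F V)) : Prop :=
  B.card = n ∧ ∀ T ⊆ B, T.card = n - 1 →
    Module.finrank F ((⨆ P ∈ T, Projectivization.submodule P) : Submodule F V) = n - 1

/-!
A `Δ`-divisible multiset `M` with fewer than `2Δ` points misses exactly `Δ` points on every
hyperplane not containing its span `W`, so its multiplicity on the kernel of a functional `f`
depends only on whether `f` annihilates `W`. Summing these multiplicities over all functionals
determines the cardinality of `M` in terms of `dim W`, and summing over the functionals that vanish
at a point `P` of `W` shows that `M P` is the same for all such `P`. For `Δ = q ^ r` the prescribed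
cardinality `q ^ l * [r + 1 - l]_q` lies below `2 * q ^ r`, and it forces
`dim W = r + 1 - l` and `M P = q ^ l`.
-/

section PointMultisets

open LinearMap Module
open scoped Finset

variable {F V : Type*} [Field F] [AddCommGroup V] [Module F V]

/-- The span of the points of positive multiplicity of a multiset of points `M`. -/
def pointSpan (M : Projectivization F V → ℕ) : Submodule F V :=
  ⨆ P ∈ {P : Projectivization F V | 0 < M P}, P.submodule

theorem pointSpan_le_iff {M : Projectivization F V → ℕ} {K : Submodule F V} :
    pointSpan M ≤ K ↔ ∀ P, 0 < M P → P.submodule ≤ K :=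
  iSup₂_le_iff

theorem eq_zero_of_not_le_pointSpan {M : Projectivization F V → ℕ} {P : Projectivization F V}
    (hP : ¬P.submodule ≤ pointSpan M) : M P = 0 :=
  Nat.eq_zero_of_not_pos fun hpos => hP (pointSpan_le_iff.1 le_rfl P hpos)

theorem finrank_submodule_sup_of_ne {P Q : Projectivization F V} (hPQ : P ≠ Q) :
    finrank F (P.submodule ⊔ Q.submodule : Submodule F V) = 2 := by
  have isAtom (R : Projectivization F V) : IsAtom R.submodule :=
    isSimpleModule_iff_isAtom.1 (isSimpleModule_iff_finrank_eq_one.2 R.finrank_submodule)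
  have disjoint : Disjoint P.submodule Q.submodule :=
    (isAtom P).disjoint_of_ne (isAtom Q) (Projectivization.submodule_injective.ne hPQ)
  have finrank_add := Submodule.finrank_sup_add_finrank_inf_eq P.submodule Q.submodule
  rwa [disjoint.eq_bot, finrank_bot, P.finrank_submodule, Q.finrank_submodule] at finrank_add

section Points

variable [Fintype (Projectivization F V)] (M : Projectivization F V → ℕ)

theorem MVal_eq_sum (K : Submodule F V) : MVal M K = ∑ P with P.submodule ≤ K, M P := by
  rw [MVal, ← finsum_mem_coe_finset]
  simp only [Finset.coe_filter_univ]

theorem MVal_top_eq_sum : MVal M ⊤ = ∑ P, M P := by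
  simp only [MVal_eq_sum, le_top, Finset.filter_true]

theorem sum_MVal_ker [Fintype (Dual F V)] (U : Submodule F V) :
    ∑ f : Dual F V with U ≤ ker f, MVal M (ker f)
      = ∑ Q, M Q * #{f : Dual F V | U ⊔ Q.submodule ≤ ker f} := by
  simp only [MVal_eq_sum, Finset.sum_filter (fun _ : Projectivization F V => _ ≤ _)]
  rw [Finset.sum_comm]
  refine Finset.sum_congr rfl fun Q _ => ?_
  rw [← Finset.sum_filter, Finset.filter_filter, Finset.sum_const, smul_eq_mul, mul_comm]
  simp only [sup_le_iff]

end Points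

section FinitePoints

variable [Finite (Projectivization F V)] (M : Projectivization F V → ℕ)

theorem MVal_le_MVal_top (K : Submodule F V) : MVal M K ≤ MVal M ⊤ := by
  cases nonempty_fintype (Projectivization F V)
  rw [MVal_eq_sum, MVal_top_eq_sum]
  exact Finset.sum_le_sum_of_subset (Finset.filter_subset _ _)

theorem MVal_eq_MVal_top_iff {K : Submodule F V} : MVal M K = MVal M ⊤ ↔ pointSpan M ≤ K := by
  cases nonempty_fintype (Projectivization F V)
  rw [MVal_eq_sum, MVal_top_eq_sum, Finset.sum_filter,
    Finset.sum_eq_sum_iff_of_le fun P _ => by split_ifs <;> simp, pointSpan_le_iff]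
  refine forall_congr' fun P => ?_
  by_cases hP : P.submodule ≤ K <;> simp [hP, Nat.pos_iff_ne_zero, eq_comm]

variable {M}

theorem IsDivisible.MVal_add_eq_MVal_top_of_not_le {Δ : ℕ} (hdiv : IsDivisible Δ M)
    (hlt : MVal M ⊤ < 2 * Δ) {H : Submodule F V} (hH : finrank F H + 1 = finrank F V)
    (hspan : ¬pointSpan M ≤ H) : MVal M H + Δ = MVal M ⊤ := by
  have hne : MVal M H ≠ MVal M ⊤ := (MVal_eq_MVal_top_iff M).not.2 hspan
  have hle : MVal M H ≤ MVal M ⊤ := MVal_le_MVal_top M H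
  obtain ⟨c, hc⟩ := (Nat.modEq_iff_dvd' hle).1 (hdiv H hH)
  have hc_pos : 0 < c := Nat.pos_of_ne_zero (by rintro rfl; omega)
  have hc_lt : c < 2 := by
    refine lt_of_mul_lt_mul_left (?_ : Δ * c < Δ * 2) (Nat.zero_le Δ)
    omega
  obtain rfl : c = 1 := by omega
  omega

end FinitePoints

theorem IsDivisible.sum_MVal_ker_add [FiniteDimensional F V] [Finite (Projectivization F V)]
    [Fintype (Dual F V)] {M : Projectivization F V → ℕ} {Δ : ℕ}
    (hdiv : IsDivisible Δ M) (hlt : MVal M ⊤ < 2 * Δ) (U : Submodule F V) :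
    ∑ f : Dual F V with U ≤ ker f, MVal M (ker f)
        + Δ * #{f : Dual F V | U ≤ ker f}
      = MVal M ⊤ * #{f : Dual F V | U ≤ ker f}
        + Δ * #{f : Dual F V | U ⊔ pointSpan M ≤ ker f} := by
  have two_values (f : Dual F V) :
      MVal M (ker f) + Δ = MVal M ⊤ + if pointSpan M ≤ ker f then Δ else 0 := by
    split_ifs with hspan
    · rw [(MVal_eq_MVal_top_iff M).2 hspan]
    · have hf : f ≠ 0 := by
        rintro rfl
        exact hspan (by simp)
      exact hdiv.MVal_add_eq_MVal_top_of_not_le hlt (Dual.finrank_ker_add_one_of_ne_zero hf) hspan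
  have hsum := Finset.sum_congr (rfl : ({f : Dual F V | U ≤ ker f} : Finset _) = _)
    fun f _ => two_values f
  simpa only [Finset.sum_add_distrib, Finset.sum_const, ← Finset.sum_filter,
    Finset.filter_filter, ← sup_le_iff, smul_eq_mul, mul_comm] using hsum

section Functionals

variable [Fintype F] [FiniteDimensional F V] [Fintype (Dual F V)]

theorem card_le_ker_mul_pow_finrank (U : Submodule F V) :
    #{f : Dual F V | U ≤ ker f} * Fintype.card F ^ finrank F U
      = Fintype.card F ^ finrank F V := by
  have hcard : #{f : Dual F V | U ≤ ker f} = Fintype.card U.dualAnnihilator :=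
    (Fintype.card_of_subtype _ fun f => by
      simp [Submodule.mem_dualAnnihilator, SetLike.le_def]).symm
  rw [hcard, Module.card_eq_pow_finrank (K := F), ← pow_add, add_comm,
    Subspace.finrank_add_finrank_dualAnnihilator_eq]

theorem card_mul_sum_MVal_ker (M : Projectivization F V → ℕ) :
    Fintype.card F * ∑ f : Dual F V, MVal M (ker f)
      = Fintype.card F ^ finrank F V * MVal M ⊤ := by
  have : Finite V := Module.finite_of_finite F
  cases nonempty_fintype (Projectivization F V)
  have hcount := sum_MVal_ker M ⊥
  simp only [bot_le, Finset.filter_true, bot_sup_eq] at hcount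
  rw [hcount, MVal_top_eq_sum, Finset.mul_sum, Finset.mul_sum]
  refine Finset.sum_congr rfl fun Q _ => ?_
  have hQ := card_le_ker_mul_pow_finrank Q.submodule
  rw [Q.finrank_submodule, pow_one] at hQ
  rw [← hQ]
  ring

-- Summing over the functionals vanishing at `P` isolates `M P`: every other point spans a line
-- with `P` and thus contributes with the same weight. Written without subtraction.
theorem card_sq_mul_sum_MVal_ker_point (M : Projectivization F V → ℕ)
    (P : Projectivization F V) :
    Fintype.card F ^ 2 * ∑ f : Dual F V with P.submodule ≤ ker f, MVal M (ker f)
        + Fintype.card F ^ finrank F V * M P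
      = Fintype.card F ^ finrank F V * (MVal M ⊤ + Fintype.card F * M P) := by
  have : Finite V := Module.finite_of_finite F
  cases nonempty_fintype (Projectivization F V)
  have hP := card_le_ker_mul_pow_finrank P.submodule
  rw [P.finrank_submodule, pow_one] at hP
  have weight_of_ne {Q : Projectivization F V} (hQ : Q ∈ ({P}ᶜ : Finset _)) :
      Fintype.card F ^ 2
          * (M Q * #{f : Dual F V | P.submodule ⊔ Q.submodule ≤ ker f})
        = Fintype.card F ^ finrank F V * M Q := by
    have hPQ : P ≠ Q := by simpa [eq_comm] using hQ
    rw [← card_le_ker_mul_pow_finrank (P.submodule ⊔ Q.submodule),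
      finrank_submodule_sup_of_ne hPQ]
    ring
  rw [sum_MVal_ker, MVal_top_eq_sum, Fintype.sum_eq_add_sum_compl P,
    Fintype.sum_eq_add_sum_compl P M, sup_idem, mul_add, Finset.mul_sum,
    Finset.sum_congr rfl fun Q hQ => weight_of_ne hQ, ← Finset.mul_sum, ← hP]
  ring

end Functionals

section Divisible

variable [Fintype F] [FiniteDimensional F V] {M : Projectivization F V → ℕ} {Δ : ℕ}

theorem IsDivisible.MVal_top_mul_pow_finrank_pointSpan (hdiv : IsDivisible Δ M)
    (hlt : MVal M ⊤ < 2 * Δ) :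
    (MVal M ⊤ : ℤ) * (Fintype.card F - 1) * Fintype.card F ^ finrank F (pointSpan M)
      = Δ * Fintype.card F * (Fintype.card F ^ finrank F (pointSpan M) - 1) := by
  have : Finite V := Module.finite_of_finite F
  have : Finite (Dual F V) := Module.finite_of_finite F
  cases nonempty_fintype (Dual F V)
  have hbot := card_le_ker_mul_pow_finrank (⊥ : Submodule F V)
  have hspan := card_le_ker_mul_pow_finrank (pointSpan M)
  have hsum := hdiv.sum_MVal_ker_add hlt ⊥
  have hpoints := card_mul_sum_MVal_ker M
  rw [finrank_bot, pow_zero, mul_one] at hbot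
  rw [hbot, bot_sup_eq] at hsum
  simp only [bot_le, Finset.filter_true] at hsum
  have hqv : (Fintype.card F : ℤ) ^ finrank F V ≠ 0 := by simp
  refine mul_left_cancel₀ hqv ?_
  zify at hspan hsum hpoints
  set q := (Fintype.card F : ℤ)
  set k := finrank F (pointSpan M)
  linear_combination -q * q ^ k * hsum + q ^ k * hpoints - Δ * q * hspan

theorem IsDivisible.pow_finrank_pointSpan_mul_apply (hdiv : IsDivisible Δ M)
    (hlt : MVal M ⊤ < 2 * Δ) {P : Projectivization F V} (hP : P.submodule ≤ pointSpan M) :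
    Fintype.card F ^ finrank F (pointSpan M) * M P = Fintype.card F * Δ := by
  have htotal := hdiv.MVal_top_mul_pow_finrank_pointSpan hlt
  have : Finite V := Module.finite_of_finite F
  have : Finite (Dual F V) := Module.finite_of_finite F
  cases nonempty_fintype (Dual F V)
  have hpoint := card_le_ker_mul_pow_finrank P.submodule
  have hspan := card_le_ker_mul_pow_finrank (pointSpan M)
  have hsum := hdiv.sum_MVal_ker_add hlt P.submodule
  have hpoints := card_sq_mul_sum_MVal_ker_point M P
  rw [P.finrank_submodule, pow_one] at hpoint
  rw [sup_eq_right.2 hP] at hsum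
  have hqv : (Fintype.card F : ℤ) ^ finrank F V ≠ 0 := by simp
  have hq1 : (Fintype.card F : ℤ) - 1 ≠ 0 :=
    sub_ne_zero.2 (by exact_mod_cast (Fintype.one_lt_card (α := F)).ne')
  zify at hpoint hspan hsum hpoints ⊢
  refine mul_left_cancel₀ (mul_ne_zero hqv hq1) ?_
  set q := (Fintype.card F : ℤ)
  set k := finrank F (pointSpan M)
  linear_combination q ^ 2 * q ^ k * hsum - q ^ k * hpoints
    + (MVal M ⊤ - Δ) * q * q ^ k * hpoint + Δ * q ^ 2 * hspan + q ^ finrank F V * htotal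

end Divisible

end PointMultisets

theorem gaussNum_mul_sub_one (q k : ℕ) : (gaussNum q k : ℤ) * (q - 1) = q ^ k - 1 := by
  simpa only [gaussNum, Nat.cast_sum, Nat.cast_pow] using geom_sum_mul (q : ℤ) k

theorem pow_mul_gaussNum_mul_sub_one {q l m : ℕ} (hlm : l ≤ m) :
    ((q ^ l * gaussNum q (m - l) : ℕ) : ℤ) * (q - 1) = q ^ m - q ^ l := by
  rw [Nat.cast_mul, mul_assoc, gaussNum_mul_sub_one, mul_sub, mul_one, Nat.cast_pow,
    pow_mul_pow_sub _ hlm]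

theorem pow_mul_gaussNum_lt {q l r : ℕ} (hq : 2 ≤ q) (hlr : l ≤ r + 1) :
    q ^ l * gaussNum q (r + 1 - l) < 2 * q ^ r := by
  zify at hq
  have hql : 0 < (q : ℤ) ^ l := by positivity
  have hlt : ((q ^ l * gaussNum q (r + 1 - l) : ℕ) : ℤ) * (q - 1) < 2 * q ^ r * (q - 1) := by
    calc ((q ^ l * gaussNum q (r + 1 - l) : ℕ) : ℤ) * (q - 1)
        = q ^ (r + 1) - q ^ l := pow_mul_gaussNum_mul_sub_one hlr
      _ < q ^ r * q := by rw [pow_succ]; linarith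
      _ ≤ q ^ r * (2 * (q - 1)) := by gcongr; linarith
      _ = 2 * q ^ r * (q - 1) := by ring
  exact_mod_cast lt_of_mul_lt_mul_right hlt (by linarith)

theorem stmt_2_general {F V : Type*} [Field F] [Fintype F] [AddCommGroup V] [Module F V]
    [FiniteDimensional F V] {q l r : ℕ} (hq : Fintype.card F = q) (hlr : l ≤ r + 1)
    {M : Projectivization F V → ℕ} (hdiv : IsDivisible (q ^ r) M)
    (hcard : MVal M ⊤ = q ^ l * gaussNum q (r + 1 - l)) :
    ∃ K : Submodule F V, Module.finrank F K = r + 1 - l ∧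
      ∀ P, M P = if P.submodule ≤ K then q ^ l else 0 := by
  subst hq
  have hq : 1 < Fintype.card F := Fintype.one_lt_card
  have hlt : MVal M ⊤ < 2 * Fintype.card F ^ r := hcard ▸ pow_mul_gaussNum_lt hq hlr
  have hdim : Module.finrank F (pointSpan M) + l = r + 1 := by
    have htotal := hdiv.MVal_top_mul_pow_finrank_pointSpan hlt
    rw [hcard, pow_mul_gaussNum_mul_sub_one hlr] at htotal
    refine Nat.pow_right_injective hq ?_
    zify
    push_cast at htotal
    linear_combination -htotal
  refine ⟨pointSpan M, by omega, fun P => ?_⟩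
  split_ifs with hP
  · have hmul := hdiv.pow_finrank_pointSpan_mul_apply hlt hP
    rw [← pow_succ', ← hdim, pow_add] at hmul
    exact Nat.eq_of_mul_eq_mul_left (pow_pos (zero_lt_one.trans hq) _) hmul
  · exact eq_zero_of_not_le_pointSpan hP

theorem stmt_2 {F : Type*} [Field F] [Fintype F] (q v l r : ℕ)
    (hq : Fintype.card F = q) (hlr : l ≤ r)
    (M : Projectivization F (Fin v → F) → ℕ)
    (hdiv : IsDivisible (q ^ r) M)
    (hcard : MVal M ⊤ = q ^ l * gaussNum q (r + 1 - l)) :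
    ∃ K : Submodule F (Fin v → F), Module.finrank F K = r + 1 - l ∧
      ∀ P, M P = if P.submodule ≤ K then q ^ l else 0 :=
  stmt_2_general hq (Nat.le_succ_of_le hlr) hdiv hcard
end

section
/- Let M be a 4-divisible multiset of points in PG(v-1,2) of cardinality 10. Then either there exists a point P with M(P) ≥ 4, or M = 2·B where B is the characteristic function of a projective base of size 5. In particular, every point multiplicity of M lies in {0,2,4,6}. -/
open scoped Classical

/-!
Over `𝔽₂` the points are the nonzero vectors; let `f` be the multiplicity function of `M` on their
span, of dimension `k`. Every hyperplane of the span misses `4` or `8` of the ten points, so away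
from `0` the Walsh coefficients of `f` are `2` and `-6`. Hence `f ⋆ f + 4 f - 12 δ₀` is the constant
`2 ^ (7 - k)`. At `0` this says `∑ f² = 12 + 2 ^ (7 - k)`, and elsewhere it gives `f ≤ 2 ^ (5 - k)`;
since `∑ f = 10`, together they force `k ≤ 4`.

Summing the weights of the hyperplanes missing a given point yields `f ≤ 6` and, for `k ≤ 3`, that
`f` is even; in that case `∑ f² > 2 ∑ f` produces a point of multiplicity at least `4`. For `k = 4`
we get `f ≤ 2` and `∑ f (2 - f) = 0`, so `f = 2 · 1_B` with `|B| = 5`. Divisibility by `4` makes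
every functional vanish on the sum of `B`, so `B` is five vectors of rank four with sum zero, which
is a projective base.
-/

/-- The nontrivial additive character `a ↦ (-1) ^ a` of `𝔽₂`. -/
def signChar : AddChar (ZMod 2) ℤ := AddChar.zmodChar 2 neg_one_sq

theorem signChar_eq_one_sub_two_mul (a : ZMod 2) : signChar a = 1 - 2 * (a.val : ℤ) := by
  revert a; decide

section Walsh

variable {W : Type*} [AddCommGroup W]

/-- The convolution square of `f`; over `𝔽₂` it is also its autocorrelation, as `x - y = x + y`. -/
def autocorrelation [Fintype W] (f : W → ℤ) (x : W) : ℤ := ∑ y, f y * f (x + y)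

theorem autocorrelation_zero_right [Fintype W] (f : W → ℤ) :
    autocorrelation f 0 = ∑ x, f x ^ 2 := by
  simp only [autocorrelation, zero_add, sq]

variable [Module (ZMod 2) W]

noncomputable instance [Finite W] : Fintype (Module.Dual (ZMod 2) W) :=
  have := Module.finite_of_finite (ZMod 2) (M := Module.Dual (ZMod 2) W)
  Fintype.ofFinite _

theorem sum_dual_signChar [Finite W] (x : W) :
    ∑ ψ : Module.Dual (ZMod 2) W, signChar (ψ x) =
      if x = 0 then 2 ^ Module.finrank (ZMod 2) W else 0 := by
  let χ : AddChar (Module.Dual (ZMod 2) W) ℤ :=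
    signChar.compAddMonoidHom (Module.Dual.eval (ZMod 2) W x).toAddMonoidHom
  have hχ : χ = 0 ↔ x = 0 := by
    rw [← Module.forall_dual_apply_eq_zero_iff (ZMod 2) x, DFunLike.ext_iff]
    exact forall_congr' fun ψ => (show ∀ a, signChar a = 1 ↔ a = 0 by decide) (ψ x)
  have hcard : Fintype.card (Module.Dual (ZMod 2) W) = 2 ^ Module.finrank (ZMod 2) W := by
    rw [Module.card_eq_pow_finrank (K := ZMod 2), Subspace.dual_finrank_eq, ZMod.card]
  have hsum := AddChar.sum_eq_ite χ
  rw [hcard] at hsum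
  simpa [χ, hχ] using hsum

theorem two_mul_sum_dual_val [Finite W] {x : W} (hx : x ≠ 0) :
    2 * ∑ ψ : Module.Dual (ZMod 2) W, (ψ x).val = 2 ^ Module.finrank (ZMod 2) W := by
  have h₀ := sum_dual_signChar (0 : W)
  have h₁ := sum_dual_signChar x
  simp only [map_zero, AddChar.map_zero_eq_one, if_true] at h₀
  simp only [if_neg hx, signChar_eq_one_sub_two_mul, Finset.sum_sub_distrib, h₀,
    ← Finset.mul_sum] at h₁
  zify
  linarith

variable [Fintype W]

/-- The Walsh–Hadamard transform, that is, the Fourier transform over `𝔽₂`. -/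
def walshTransform (f : W → ℤ) (ψ : Module.Dual (ZMod 2) W) : ℤ := ∑ x, f x * signChar (ψ x)

theorem walshTransform_zero_right (f : W → ℤ) : walshTransform f 0 = ∑ x, f x := by
  simp [walshTransform]

theorem walshTransform_autocorrelation (f : W → ℤ) (ψ : Module.Dual (ZMod 2) W) :
    walshTransform (autocorrelation f) ψ = walshTransform f ψ ^ 2 := by
  have shift (y : W) :
      ∑ x, f (x + y) * signChar (ψ x) = signChar (ψ y) * walshTransform f ψ := by
    rw [← Equiv.sum_comp (Equiv.addRight y), walshTransform, Finset.mul_sum]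
    refine Finset.sum_congr rfl fun x _ => ?_
    simp only [Equiv.coe_addRight, add_assoc, ZModModule.add_self, add_zero, map_add,
      AddChar.map_add_eq_mul]
    ring
  calc walshTransform (autocorrelation f) ψ
      = ∑ y, f y * ∑ x, f (x + y) * signChar (ψ x) := by
        simp only [walshTransform, autocorrelation, Finset.sum_mul, Finset.mul_sum, mul_assoc]
        exact Finset.sum_comm
    _ = ∑ y, f y * signChar (ψ y) * walshTransform f ψ := by simp only [shift, mul_assoc]
    _ = walshTransform f ψ ^ 2 := by rw [← Finset.sum_mul, sq]; rfl

theorem walshTransform_inversion (f : W → ℤ) (x : W) :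
    ∑ ψ, walshTransform f ψ * signChar (ψ x) = 2 ^ Module.finrank (ZMod 2) W * f x := by
  have eq_iff (y : W) : y + x = 0 ↔ y = x := by
    rw [add_eq_zero_iff_eq_neg, ZModModule.neg_eq_self]
  calc ∑ ψ, walshTransform f ψ * signChar (ψ x)
      = ∑ y, f y * ∑ ψ : Module.Dual (ZMod 2) W, signChar (ψ (y + x)) := by
        simp only [walshTransform, Finset.sum_mul, Finset.mul_sum, map_add,
          AddChar.map_add_eq_mul, mul_assoc]
        exact Finset.sum_comm
    _ = 2 ^ Module.finrank (ZMod 2) W * f x := by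
        simp only [sum_dual_signChar, eq_iff, mul_ite, mul_zero, Finset.sum_ite_eq',
          Finset.mem_univ, if_true, mul_comm]

/-- If `f` takes only two Walsh coefficients away from `0`, then a quadratic polynomial in `f`
for the convolution product has its transform supported at `0`, hence is constant. -/
theorem two_pow_mul_autocorrelation_of_walshTransform_eq_or {f : W → ℤ} {a b : ℤ}
    (h : ∀ ψ ≠ 0, walshTransform f ψ = a ∨ walshTransform f ψ = b) (x : W) :
    2 ^ Module.finrank (ZMod 2) W *
        (autocorrelation f x - (a + b) * f x + if x = 0 then a * b else 0) =
      (∑ y, f y - a) * (∑ y, f y - b) := by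
  let g (x : W) : ℤ := autocorrelation f x - (a + b) * f x + if x = 0 then a * b else 0
  have transform_g (ψ : Module.Dual (ZMod 2) W) : walshTransform g ψ =
      (walshTransform f ψ - a) * (walshTransform f ψ - b) := by
    calc walshTransform g ψ
        = walshTransform (autocorrelation f) ψ - (a + b) * walshTransform f ψ + a * b := by
          simp [walshTransform, g, add_mul, sub_mul, Finset.sum_add_distrib, Finset.mul_sum,
            mul_assoc]
      _ = _ := by rw [walshTransform_autocorrelation]; ring
  have transform_g_eq_zero (ψ : Module.Dual (ZMod 2) W) (hψ : ψ ≠ 0) :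
      walshTransform g ψ = 0 := by
    rw [transform_g]
    rcases h ψ hψ with hψ | hψ <;> simp [hψ]
  rw [← walshTransform_inversion g x, Fintype.sum_eq_single 0
    fun ψ hψ => by rw [transform_g_eq_zero ψ hψ, zero_mul]]
  simp [transform_g, walshTransform_zero_right]

end Walsh

section Weight

variable {W : Type*} [AddCommGroup W] [Module (ZMod 2) W] [Fintype W]

/-- The number of members off the hyperplane `ψ = 0` of the multiset of vectors with
multiplicity function `f`, i.e. the Hamming weight of the codeword of `ψ`. -/
def weight (f : W → ℕ) (ψ : Module.Dual (ZMod 2) W) : ℕ := ∑ x, f x * (ψ x).val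

theorem weight_le_sum (f : W → ℕ) (ψ : Module.Dual (ZMod 2) W) : weight f ψ ≤ ∑ x, f x :=
  Finset.sum_le_sum fun x _ =>
    mul_le_of_le_one_right (Nat.zero_le _) (Nat.le_of_lt_succ (ZMod.val_lt (ψ x)))

theorem walshTransform_eq_sum_sub_two_mul_weight (f : W → ℕ) (ψ : Module.Dual (ZMod 2) W) :
    walshTransform (fun x => (f x : ℤ)) ψ = ∑ x, (f x : ℤ) - 2 * weight f ψ := by
  simp only [walshTransform, weight, Nat.cast_sum, Nat.cast_mul, Finset.mul_sum,
    ← Finset.sum_sub_distrib, signChar_eq_one_sub_two_mul]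
  exact Finset.sum_congr rfl fun x _ => by ring

theorem eq_zero_of_weight_eq_zero {f : W → ℕ}
    (hspan : Submodule.span (ZMod 2) (Function.support f) = ⊤) {ψ : Module.Dual (ZMod 2) W}
    (h : weight f ψ = 0) : ψ = 0 := by
  refine LinearMap.ext_on hspan fun x hx => ?_
  have hx' := Finset.sum_eq_zero_iff.1 h x (Finset.mem_univ x)
  exact (ZMod.val_eq_zero _).1 ((mul_eq_zero.1 hx').resolve_left hx)

theorem four_mul_sum_dual_val_mul_weight {f : W → ℕ} (hf : f 0 = 0) {x : W} (hx : x ≠ 0) :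
    4 * ∑ ψ : Module.Dual (ZMod 2) W, (ψ x).val * weight f ψ =
      2 ^ Module.finrank (ZMod 2) W * (∑ y, f y + f x) := by
  set n : ℤ := ∑ y, (f y : ℤ) with hn
  set s := walshTransform fun y => (f y : ℤ)
  have expand (ψ : Module.Dual (ZMod 2) W) : 4 * (((ψ x).val : ℤ) * weight f ψ) =
      2 * (ψ x).val * n - s ψ * signChar (ψ 0) + s ψ * signChar (ψ x) := by
    have hs : s ψ = n - 2 * weight f ψ := walshTransform_eq_sum_sub_two_mul_weight f ψ
    simp only [map_zero, AddChar.map_zero_eq_one, hs, signChar_eq_one_sub_two_mul]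
    ring
  have hval : 2 * ∑ ψ : Module.Dual (ZMod 2) W, ((ψ x).val : ℤ) =
      2 ^ Module.finrank (ZMod 2) W := mod_cast two_mul_sum_dual_val hx
  zify
  simp only [Finset.mul_sum, expand]
  rw [Finset.sum_add_distrib, Finset.sum_sub_distrib, ← Finset.sum_mul, ← Finset.mul_sum, hval,
    walshTransform_inversion, walshTransform_inversion, hf, ← hn]
  push_cast
  ring

theorem four_mul_dvd_two_pow_mul {f : W → ℕ} {Δ : ℕ} (hf : f 0 = 0) (hdvd : ∀ ψ, Δ ∣ weight f ψ)
    {x : W} (hx : x ≠ 0) :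
    4 * Δ ∣ 2 ^ Module.finrank (ZMod 2) W * (∑ y, f y + f x) := by
  rw [← four_mul_sum_dual_val_mul_weight hf hx]
  exact mul_dvd_mul_left 4 (Finset.dvd_sum fun ψ _ => (hdvd ψ).mul_left _)

/-- The average of the weights over all `ψ` with `ψ x = 1` is half of `∑ y, f y + f x`. -/
theorem sum_add_le_two_mul_of_weight_le {f : W → ℕ} {c : ℕ} (hf : f 0 = 0)
    (hle : ∀ ψ, weight f ψ ≤ c) {x : W} (hx : x ≠ 0) : ∑ y, f y + f x ≤ 2 * c := by
  refine Nat.le_of_mul_le_mul_left ?_ (Nat.two_pow_pos (Module.finrank (ZMod 2) W))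
  calc 2 ^ Module.finrank (ZMod 2) W * (∑ y, f y + f x)
      = 4 * ∑ ψ : Module.Dual (ZMod 2) W, (ψ x).val * weight f ψ :=
        (four_mul_sum_dual_val_mul_weight hf hx).symm
    _ ≤ 4 * ∑ ψ : Module.Dual (ZMod 2) W, (ψ x).val * c := by gcongr; exact hle _
    _ = 2 ^ Module.finrank (ZMod 2) W * (2 * c) := by
        rw [← Finset.sum_mul, ← two_mul_sum_dual_val hx]; ring

/-- `f` is the multiplicity function of a `Δ`-divisible multiset of nonzero vectors which
spans the ambient space. -/
structure IsSpanningDivisible (Δ : ℕ) (f : W → ℕ) : Prop where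
  map_zero : f 0 = 0
  span_support : Submodule.span (ZMod 2) (Function.support f) = ⊤
  dvd_weight : ∀ ψ, Δ ∣ weight f ψ

theorem sum_restrict_mul {g : W → ℕ} {S : Submodule (ZMod 2) W} [Fintype S]
    (hS : Function.support g ⊆ S) (h : W → ℕ) : ∑ x : S, g x * h x = ∑ x, g x * h x := by
  refine Fintype.sum_of_injective Subtype.val Subtype.val_injective _ _ (fun x hx => ?_)
    fun _ => rfl
  rw [Subtype.range_coe] at hx
  rw [Function.notMem_support.1 fun hx' => hx (hS hx'), zero_mul]

theorem isSpanningDivisible_restrict_span {Δ : ℕ} {g : W → ℕ} (hg : g 0 = 0)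
    (hdvd : ∀ ψ, Δ ∣ weight g ψ) :
    IsSpanningDivisible Δ fun x : Submodule.span (ZMod 2) (Function.support g) => g x where
  map_zero := hg
  span_support := Submodule.span_span_coe_preimage
  dvd_weight ψ := by
    obtain ⟨φ, rfl⟩ := LinearMap.exists_extend ψ
    have hweight :
        ∑ x : Submodule.span (ZMod 2) (Function.support g), g x * (φ x).val = weight g φ :=
      sum_restrict_mul Submodule.subset_span fun x => (φ x).val
    exact (hdvd φ).trans (dvd_of_eq hweight.symm)

end Weight

namespace IsSpanningDivisible

variable {W : Type*} [AddCommGroup W] [Module (ZMod 2) W] [Fintype W] {f : W → ℕ}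

theorem weight_eq_four_or_eight (hf : IsSpanningDivisible 4 f) (hsum : ∑ x, f x = 10)
    {ψ : Module.Dual (ZMod 2) W} (hψ : ψ ≠ 0) : weight f ψ = 4 ∨ weight f ψ = 8 := by
  have hpos : weight f ψ ≠ 0 := fun h => hψ (eq_zero_of_weight_eq_zero hf.span_support h)
  have hle := weight_le_sum f ψ
  have hdvd := hf.dvd_weight ψ
  omega

theorem two_pow_mul_autocorrelation (hf : IsSpanningDivisible 4 f) (hsum : ∑ x, f x = 10)
    (x : W) :
    2 ^ Module.finrank (ZMod 2) W *
      (autocorrelation (fun y => (f y : ℤ)) x + 4 * f x - if x = 0 then 12 else 0) = 128 := by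
  have hsumZ : ∑ x, (f x : ℤ) = 10 := mod_cast hsum
  have htransform (ψ : Module.Dual (ZMod 2) W) (hψ : ψ ≠ 0) :
      walshTransform (fun y => (f y : ℤ)) ψ = 2 ∨
        walshTransform (fun y => (f y : ℤ)) ψ = -6 := by
    rw [walshTransform_eq_sum_sub_two_mul_weight, hsumZ]
    rcases hf.weight_eq_four_or_eight hsum hψ with h | h <;> simp [h]
  have key := two_pow_mul_autocorrelation_of_walshTransform_eq_or htransform x
  rw [hsumZ] at key
  norm_num at key
  rw [← key]
  split_ifs <;> ring

theorem two_pow_mul_sum_sq (hf : IsSpanningDivisible 4 f) (hsum : ∑ x, f x = 10) :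
    2 ^ Module.finrank (ZMod 2) W * (∑ x, (f x : ℤ) ^ 2 - 12) = 128 := by
  simpa [autocorrelation_zero_right, hf.map_zero] using hf.two_pow_mul_autocorrelation hsum 0

theorem two_pow_mul_le (hf : IsSpanningDivisible 4 f) (hsum : ∑ x, f x = 10) (x : W) :
    2 ^ Module.finrank (ZMod 2) W * f x ≤ 32 := by
  rcases eq_or_ne x 0 with rfl | hx
  · simp [hf.map_zero]
  have key := hf.two_pow_mul_autocorrelation hsum x
  rw [if_neg hx, sub_zero] at key
  have hnonneg : 0 ≤ autocorrelation (fun y => (f y : ℤ)) x :=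
    Finset.sum_nonneg fun y _ => by positivity
  zify
  nlinarith [pow_pos (two_pos (α := ℤ)) (Module.finrank (ZMod 2) W)]

theorem finrank_le_four (hf : IsSpanningDivisible 4 f) (hsum : ∑ x, f x = 10) :
    Module.finrank (ZMod 2) W ≤ 4 := by
  obtain ⟨x, -, hx⟩ : ∃ x ∈ Finset.univ, (f x : ℤ) < (f x : ℤ) ^ 2 := by
    refine Finset.exists_lt_of_sum_lt ?_
    have hsumZ : ∑ x, (f x : ℤ) = 10 := mod_cast hsum
    have hsq := hf.two_pow_mul_sum_sq hsum
    rw [hsumZ]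
    have := pos_of_mul_pos_right (hsq ▸ (by norm_num : (0 : ℤ) < 128)) (by positivity)
    linarith
  have two_le : 2 ≤ f x := by
    by_contra! h
    interval_cases f x <;> simp at hx
  have hle : 2 ^ Module.finrank (ZMod 2) W ≤ 2 ^ 4 := by
    have := hf.two_pow_mul_le hsum x
    nlinarith
  exact (Nat.pow_le_pow_iff_right one_lt_two).1 hle

theorem le_six (hf : IsSpanningDivisible 4 f) (hsum : ∑ x, f x = 10) (x : W) : f x ≤ 6 := by
  rcases eq_or_ne x 0 with rfl | hx
  · simp [hf.map_zero]
  have weight_le (ψ : Module.Dual (ZMod 2) W) : weight f ψ ≤ 8 := by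
    have hle := weight_le_sum f ψ
    have hdvd := hf.dvd_weight ψ
    omega
  have := sum_add_le_two_mul_of_weight_le hf.map_zero weight_le hx
  omega

theorem even_of_finrank_le_three (hf : IsSpanningDivisible 4 f) (hsum : ∑ x, f x = 10)
    (hrank : Module.finrank (ZMod 2) W ≤ 3) (x : W) : Even (f x) := by
  rcases eq_or_ne x 0 with rfl | hx
  · simp [hf.map_zero]
  have hdvd := four_mul_dvd_two_pow_mul hf.map_zero hf.dvd_weight hx
  have : 2 ^ 3 * 2 ∣ 2 ^ 3 * (10 + f x) := by
    rw [hsum] at hdvd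
    exact hdvd.trans (mul_dvd_mul_right (pow_dvd_pow 2 hrank) _)
  rw [Nat.even_iff]
  omega

theorem exists_four_le_of_finrank_le_three (hf : IsSpanningDivisible 4 f)
    (hsum : ∑ x, f x = 10) (hrank : Module.finrank (ZMod 2) W ≤ 3) : ∃ x, 4 ≤ f x := by
  have sum_lt : ∑ x, 2 * (f x : ℤ) < ∑ x, (f x : ℤ) ^ 2 := by
    have hsumZ : ∑ x, (f x : ℤ) = 10 := mod_cast hsum
    rw [← Finset.mul_sum, hsumZ]
    have hsq := hf.two_pow_mul_sum_sq hsum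
    have : (2 : ℤ) ^ Module.finrank (ZMod 2) W ≤ 2 ^ 3 := pow_le_pow_right₀ one_le_two hrank
    have hpos := pow_pos (two_pos (α := ℤ)) (Module.finrank (ZMod 2) W)
    by_contra! hle
    nlinarith
  obtain ⟨x, -, hx⟩ := Finset.exists_lt_of_sum_lt sum_lt
  have : 2 < f x := by
    zify
    nlinarith
  obtain ⟨m, hm⟩ := hf.even_of_finrank_le_three hsum hrank x
  exact ⟨x, by omega⟩

theorem eq_zero_or_eq_two_of_finrank_eq_four (hf : IsSpanningDivisible 4 f)
    (hsum : ∑ x, f x = 10) (hrank : Module.finrank (ZMod 2) W = 4) (x : W) :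
    f x = 0 ∨ f x = 2 := by
  have le_two (x : W) : f x ≤ 2 := by
    have := hf.two_pow_mul_le hsum x
    rw [hrank] at this
    omega
  have sum_eq_zero : ∑ x, (f x : ℤ) * (2 - f x) = 0 := by
    have hsumZ : ∑ x, (f x : ℤ) = 10 := mod_cast hsum
    have hsq := hf.two_pow_mul_sum_sq hsum
    rw [hrank] at hsq
    simp only [mul_sub, Finset.sum_sub_distrib, ← Finset.sum_mul, hsumZ, ← sq]
    linarith
  have nonneg (x : W) : 0 ≤ (f x : ℤ) * (2 - f x) :=
    mul_nonneg (Nat.cast_nonneg _) (by have := le_two x; omega)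
  have := (Finset.sum_eq_zero_iff_of_nonneg fun x _ => nonneg x).1 sum_eq_zero x (Finset.mem_univ x)
  rcases mul_eq_zero.1 this with h | h <;> omega

end IsSpanningDivisible

section Points

variable {F V : Type*} [Field F] [AddCommGroup V] [Module F V]

theorem submodule_le_iff_rep_mem (P : Projectivization F V) (K : Submodule F V) :
    P.submodule ≤ K ↔ P.rep ∈ K := by
  rw [Projectivization.submodule_eq, Submodule.span_singleton_le_iff_mem]

theorem MVal_eq_sum_ite [Fintype (Projectivization F V)] (M : Projectivization F V → ℕ)
    (K : Submodule F V) : MVal M K = ∑ P, if P.rep ∈ K then M P else 0 := by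
  rw [MVal, finsum_mem_eq_finite_toFinset_sum _ (Set.toFinite _), ← Finset.sum_filter]
  congr 1
  ext P
  simp [submodule_le_iff_rep_mem]

theorem MVal_top [Fintype (Projectivization F V)] (M : Projectivization F V → ℕ) :
    MVal M ⊤ = ∑ P, M P := by
  simp [MVal_eq_sum_ite]

theorem iSup_submodule_eq_of_sum_rep_eq_zero {B T : Finset (Projectivization F V)}
    (hsum : ∑ P ∈ B, P.rep = 0) (hT : T ⊆ B) (hcard : T.card = B.card - 1) :
    ⨆ P ∈ T, P.submodule = ⨆ P ∈ B, P.submodule := by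
  refine le_antisymm (biSup_mono fun P hP => hT hP) (iSup₂_le fun P hP => ?_)
  rw [submodule_le_iff_rep_mem]
  have mem_of_mem : ∀ Q ∈ T, Q.rep ∈ ⨆ P ∈ T, P.submodule := fun Q hQ =>
    (submodule_le_iff_rep_mem Q _).1 (le_biSup Projectivization.submodule hQ)
  by_cases hPT : P ∈ T
  · exact mem_of_mem P hPT
  · have insert_eq : insert P T = B := by
      refine Finset.eq_of_subset_of_card_le (Finset.insert_subset hP hT) ?_
      rw [Finset.card_insert_of_notMem hPT]
      omega
    rw [← insert_eq, Finset.sum_insert hPT] at hsum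
    rw [eq_neg_of_add_eq_zero_left hsum]
    exact Submodule.neg_mem _ (Submodule.sum_mem _ mem_of_mem)

theorem isProjBase_of_sum_rep_eq_zero {n : ℕ} {B : Finset (Projectivization F V)}
    (hcard : B.card = n) (hsum : ∑ P ∈ B, P.rep = 0)
    (hrank : Module.finrank F (⨆ P ∈ B, P.submodule : Submodule F V) = n - 1) :
    IsProjBase n B :=
  ⟨hcard, fun T hT hTcard => by
    rwa [iSup_submodule_eq_of_sum_rep_eq_zero hsum hT (hcard ▸ hTcard)]⟩

end Points

section BinaryPoints

variable {V : Type*} [AddCommGroup V] [Module (ZMod 2) V]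

theorem rep_mk_zmod_two (x : V) (hx : x ≠ 0) :
    (Projectivization.mk (ZMod 2) x hx).rep = x := by
  obtain ⟨a, ha⟩ := Projectivization.exists_smul_eq_mk_rep (ZMod 2) x hx
  rw [← ha, Subsingleton.elim a 1, one_smul]

theorem rep_injective : Function.Injective (Projectivization.rep (K := ZMod 2) (V := V)) :=
  fun P Q h => by
    rw [← P.mk_rep, ← Q.mk_rep]
    congr 1

theorem range_rep : Set.range (Projectivization.rep (K := ZMod 2) (V := V)) = {0}ᶜ :=
  Set.Subset.antisymm (Set.range_subset_iff.2 Projectivization.rep_nonzero) fun x hx =>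
    ⟨Projectivization.mk (ZMod 2) x hx, rep_mk_zmod_two x hx⟩

/-- The point multiset `M` as a multiplicity function on vectors: over `𝔽₂` the points are the
nonzero vectors, and `0` gets multiplicity `0`. -/
noncomputable def vecMult (M : Projectivization (ZMod 2) V → ℕ) (x : V) : ℕ :=
  if hx : x ≠ 0 then M (Projectivization.mk (ZMod 2) x hx) else 0

@[simp]
theorem vecMult_zero (M : Projectivization (ZMod 2) V → ℕ) : vecMult M 0 = 0 := by
  simp [vecMult]

@[simp]
theorem vecMult_rep (M : Projectivization (ZMod 2) V → ℕ) (P : Projectivization (ZMod 2) V) :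
    vecMult M P.rep = M P := by
  rw [vecMult, dif_pos P.rep_nonzero, P.mk_rep]

theorem support_vecMult (M : Projectivization (ZMod 2) V → ℕ) :
    Function.support (vecMult M) = Projectivization.rep '' Function.support M := by
  ext x
  by_cases hx : x = 0
  · simp [hx, Projectivization.rep_nonzero]
  · obtain ⟨P, rfl⟩ : x ∈ Set.range (Projectivization.rep (K := ZMod 2)) := by
      rw [range_rep]
      exact hx
    simp [rep_injective.eq_iff]

theorem span_support_vecMult (M : Projectivization (ZMod 2) V → ℕ) :
    Submodule.span (ZMod 2) (Function.support (vecMult M)) =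
      ⨆ P ∈ Function.support M, P.submodule := by
  rw [support_vecMult, Submodule.span_eq_iSup_of_singleton_spans, iSup_image]
  simp only [Projectivization.submodule_eq]

theorem sum_vecMult_mul [Fintype V] [Fintype (Projectivization (ZMod 2) V)]
    (M : Projectivization (ZMod 2) V → ℕ) (h : V → ℕ) :
    ∑ x, vecMult M x * h x = ∑ P, M P * h P.rep := by
  refine (Fintype.sum_of_injective Projectivization.rep rep_injective _ _ (fun x hx => ?_)
    fun P => by rw [vecMult_rep]).symm
  obtain rfl : x = 0 := by simpa [range_rep] using hx
  rw [vecMult_zero, zero_mul]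

theorem sum_vecMult [Fintype V] (M : Projectivization (ZMod 2) V → ℕ) :
    ∑ x, vecMult M x = MVal M ⊤ := by
  have := Fintype.ofFinite (Projectivization (ZMod 2) V)
  simpa [MVal_top] using sum_vecMult_mul M 1

theorem sum_span_vecMult [Fintype V] (M : Projectivization (ZMod 2) V → ℕ) :
    ∑ x : Submodule.span (ZMod 2) (Function.support (vecMult M)), vecMult M x = MVal M ⊤ := by
  simpa [sum_vecMult] using sum_restrict_mul (g := vecMult M) Submodule.subset_span 1

theorem MVal_ker_add_weight [Fintype V] (M : Projectivization (ZMod 2) V → ℕ)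
    (ψ : Module.Dual (ZMod 2) V) :
    MVal M (LinearMap.ker ψ) + weight (vecMult M) ψ = MVal M ⊤ := by
  have := Fintype.ofFinite (Projectivization (ZMod 2) V)
  rw [weight, sum_vecMult_mul M fun x => (ψ x).val, MVal_eq_sum_ite, MVal_top,
    ← Finset.sum_add_distrib]
  refine Finset.sum_congr rfl fun P _ => ?_
  have eq_zero_or_eq_one : ∀ a : ZMod 2, a = 0 ∨ a = 1 := by decide
  rcases eq_zero_or_eq_one (ψ P.rep) with h | h <;> simp [h, LinearMap.mem_ker, ZMod.val_one]

theorem IsDivisible.dvd_weight [Fintype V] {Δ : ℕ} {M : Projectivization (ZMod 2) V → ℕ}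
    (hM : IsDivisible Δ M) (ψ : Module.Dual (ZMod 2) V) : Δ ∣ weight (vecMult M) ψ := by
  rcases eq_or_ne ψ 0 with rfl | hψ
  · simp [weight]
  have hker := hM (LinearMap.ker ψ) (Module.Dual.finrank_ker_add_one_of_ne_zero hψ)
  rw [← MVal_ker_add_weight M ψ] at hker
  simpa using (Nat.modEq_iff_dvd' (Nat.le_add_right _ _)).1 hker

theorem sum_eq_zero_of_two_dvd_sum_val {ι : Type*} {s : Finset ι} {u : ι → V}
    (h : ∀ ψ : Module.Dual (ZMod 2) V, 2 ∣ ∑ i ∈ s, (ψ (u i)).val) : ∑ i ∈ s, u i = 0 := by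
  refine (Module.forall_dual_apply_eq_zero_iff (ZMod 2) _).1 fun ψ => ?_
  simpa using (ZMod.natCast_eq_zero_iff _ 2).2 (h ψ)

theorem isProjBase_support [Finite V] [Fintype (Projectivization (ZMod 2) V)] {n : ℕ}
    {M : Projectivization (ZMod 2) V → ℕ} (hdiv : IsDivisible 4 M) (hcard : MVal M ⊤ = 2 * n)
    (hM : ∀ P, M P = 0 ∨ M P = 2)
    (hrank : Module.finrank (ZMod 2)
      (Submodule.span (ZMod 2) (Function.support (vecMult M))) = n - 1) :
    IsProjBase n {P | M P ≠ 0} := by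
  have := Fintype.ofFinite V
  have sum_mul (h : Projectivization (ZMod 2) V → ℕ) :
      ∑ P, M P * h P = 2 * ∑ P with M P ≠ 0, h P := by
    rw [Finset.sum_filter, Finset.mul_sum]
    refine Finset.sum_congr rfl fun P _ => ?_
    rcases hM P with hP | hP <;> simp [hP]
  refine isProjBase_of_sum_rep_eq_zero ?_ (sum_eq_zero_of_two_dvd_sum_val fun ψ => ?_) ?_
  · have := sum_mul 1
    simp only [Pi.one_apply, mul_one, ← MVal_top, hcard, ← Finset.card_eq_sum_ones] at this
    omega
  · have hdvd := hdiv.dvd_weight ψ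
    rw [weight, sum_vecMult_mul M fun x => (ψ x).val, sum_mul fun P => (ψ P.rep).val] at hdvd
    omega
  · have hsup : ⨆ P ∈ ({P | M P ≠ 0} : Finset (Projectivization (ZMod 2) V)), P.submodule =
        Submodule.span (ZMod 2) (Function.support (vecMult M)) := by
      simp [span_support_vecMult]
    rw [hsup, hrank]

theorem exists_eq_vecMult (M : Projectivization (ZMod 2) V → ℕ) {x : V}
    (hx : vecMult M x ≠ 0) : ∃ P, M P = vecMult M x := by
  have hx₀ : x ≠ 0 := fun h => hx (h ▸ vecMult_zero M)
  exact ⟨Projectivization.mk (ZMod 2) x hx₀, by rw [vecMult, dif_pos hx₀]⟩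

theorem exists_mem_span_vecMult_eq (M : Projectivization (ZMod 2) V → ℕ)
    (P : Projectivization (ZMod 2) V) :
    ∃ x : Submodule.span (ZMod 2) (Function.support (vecMult M)), vecMult M x = M P := by
  by_cases hP : M P = 0
  · exact ⟨0, by simp [hP]⟩
  · exact ⟨⟨P.rep, Submodule.subset_span (by simpa using hP)⟩, vecMult_rep M P⟩

end BinaryPoints

theorem stmt_7_general {V : Type*} [AddCommGroup V] [Module (ZMod 2) V]
    [FiniteDimensional (ZMod 2) V] (M : Projectivization (ZMod 2) V → ℕ)
    (hdiv : IsDivisible 4 M) (hcard : MVal M ⊤ = 10) :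
    ((∃ P, 4 ≤ M P) ∨
      (∃ B : Finset (Projectivization (ZMod 2) V), IsProjBase 5 B ∧
        ∀ Q, M Q = if Q ∈ B then 2 else 0)) ∧
    (∀ P, M P = 0 ∨ M P = 2 ∨ M P = 4 ∨ M P = 6) := by
  have := Module.finite_of_finite (ZMod 2) (M := V)
  have := Fintype.ofFinite V
  have := Fintype.ofFinite (Projectivization (ZMod 2) V)
  let W := Submodule.span (ZMod 2) (Function.support (vecMult M))
  have hf : IsSpanningDivisible 4 fun x : W => vecMult M x :=
    isSpanningDivisible_restrict_span (vecMult_zero M) hdiv.dvd_weight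
  have hsum : ∑ x : W, vecMult M x = 10 := (sum_span_vecMult M).trans hcard
  rcases (hf.finrank_le_four hsum).lt_or_eq with hrank | hrank
  · have hrank : Module.finrank (ZMod 2) W ≤ 3 := Nat.le_of_lt_succ hrank
    refine ⟨Or.inl ?_, fun P => ?_⟩
    · obtain ⟨x, hx⟩ := hf.exists_four_le_of_finrank_le_three hsum hrank
      obtain ⟨P, hP⟩ := exists_eq_vecMult M (x := (x : V)) (by omega)
      exact ⟨P, hP ▸ hx⟩
    · obtain ⟨x, hx⟩ := exists_mem_span_vecMult_eq M P
      obtain ⟨m, hm⟩ := hf.even_of_finrank_le_three hsum hrank x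
      have := hf.le_six hsum x
      omega
  · have hM (P : Projectivization (ZMod 2) V) : M P = 0 ∨ M P = 2 := by
      obtain ⟨x, hx⟩ := exists_mem_span_vecMult_eq M P
      exact hx ▸ hf.eq_zero_or_eq_two_of_finrank_eq_four hsum hrank x
    refine ⟨Or.inr ⟨_, isProjBase_support hdiv hcard hM hrank, fun Q => ?_⟩, fun P => ?_⟩
    · rcases hM Q with hQ | hQ <;> simp [hQ]
    · rcases hM P with hP | hP <;> simp [hP]

theorem stmt_7 (v : ℕ) (M : Projectivization (ZMod 2) (Fin v → ZMod 2) → ℕ)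
    (hdiv : IsDivisible 4 M) (hcard : MVal M ⊤ = 10) :
    ((∃ P, 4 ≤ M P) ∨
      (∃ B : Finset (Projectivization (ZMod 2) (Fin v → ZMod 2)), IsProjBase 5 B ∧
        ∀ Q, M Q = if Q ∈ B then 2 else 0)) ∧
    (∀ P, M P = 0 ∨ M P = 2 ∨ M P = 4 ∨ M P = 6) :=
  stmt_7_general M hdiv hcard
end

section
/- Let M be a 4-divisible multiset of points in PG(v-1,2) of cardinality 11. Then M = χ_E + 4·χ_P for some plane E (3-dimensional subspace) and some point P. In particular M has maximum point multiplicity at least 4. -/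
open scoped Classical

/-!
Everything rests on one double count: for a subspace `K`, summing the multiplicities of the
hyperplanes through `K` determines `MVal M K` from `MVal M ⊤`. Functionals stand for hyperplanes
here, the zero functional included.

If a `q ^ r`-divisible multiset has the cardinality of an `(r + 1)`-dimensional subspace, a
hyperplane not containing its support has multiplicity exactly `gaussNum q r`. Counting at `⊥` gives
the dimension of the span of the support, and counting at a point of that span gives multiplicity
one. So the multiset is that span. It remains to find a point of multiplicity at least 4, since
removing it four times leaves a 4-divisible multiset of cardinality 7.

For cardinality 11 over the field with two elements, the hyperplane multiplicities are 11, 7 and 3.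
Let `B P` count the functionals `f` of multiplicity 3 vanishing at `P`, and let `N` be the number of
functionals. On the support, `16 * B P + N * M P` is constant. If `f` and `g` have multiplicity 3,
counting along the pencil of `ker f` and `ker g` shows that `ker f ⊓ ker g` has multiplicity 3 if
`f - g` vanishes on the support, and 1 otherwise. This gives the value of `∑ P, M P * B P ^ 2`.
Together these say `∑ P, M P ^ 2 * B P = ∑ P, M P * B P`. If all multiplicities were at most 3,
then `B` would be positive on the support, so `M` would be 0 or 1 everywhere, and summing
`16 * B P + N * M P` over the support gives a contradiction.
-/

open Module Projectivization LinearMap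
open scoped Finset

attribute [local instance] Fintype.ofFinite

section Points

variable {F V : Type*} [Field F] [AddCommGroup V] [Module F V]

theorem submodule_le_submodule_iff {P Q : Projectivization F V} :
    P.submodule ≤ Q.submodule ↔ P = Q := by
  refine ⟨fun h => submodule_injective ?_, fun h => h ▸ le_rfl⟩
  have : FiniteDimensional F Q.submodule :=
    FiniteDimensional.of_finrank_pos (by simp [Q.finrank_submodule])
  exact Submodule.eq_of_le_of_finrank_eq h (by simp only [finrank_submodule])

theorem submodule_le_ker_iff {P : Projectivization F V} {f : Dual F V} :
    P.submodule ≤ ker f ↔ f P.rep = 0 := by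
  rw [P.submodule_eq, Submodule.span_singleton_le_iff_mem, mem_ker]

theorem finrank_sup_submodule [FiniteDimensional F V] {K : Submodule F V}
    {P : Projectivization F V} (hP : ¬ P.submodule ≤ K) :
    finrank F ↥(K ⊔ P.submodule) = finrank F K + 1 := by
  have hatom : IsAtom P.submodule := by
    rw [P.submodule_eq]; exact nonzero_span_atom _ P.rep_nonzero
  have hinf : K ⊓ P.submodule = ⊥ := (hatom.not_le_iff_disjoint.mp hP).symm.eq_bot
  have := Submodule.finrank_sup_add_finrank_inf_eq K P.submodule
  rwa [hinf, finrank_bot, add_zero, P.finrank_submodule] at this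

/-- The subspace spanned by the points of positive multiplicity. -/
def supportSpan (M : Projectivization F V → ℕ) : Submodule F V :=
  ⨆ P ∈ {P : Projectivization F V | 0 < M P}, P.submodule

theorem supportSpan_le_iff {M : Projectivization F V → ℕ} {K : Submodule F V} :
    supportSpan M ≤ K ↔ ∀ P, 0 < M P → P.submodule ≤ K := by
  simp [supportSpan]

end Points

section FiniteGeometry

variable {F V : Type*} [Field F] [AddCommGroup V] [Module F V] [Finite V]
  {M N : Projectivization F V → ℕ} {K L : Submodule F V} {Δ : ℕ}

theorem mVal_eq_sum (M : Projectivization F V → ℕ) (K : Submodule F V) :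
    MVal M K = ∑ P with P.submodule ≤ K, M P := by
  rw [MVal, finsum_mem_eq_toFinset_sum, Set.toFinset_ofPred]

theorem mVal_top (M : Projectivization F V → ℕ) : MVal M ⊤ = ∑ P, M P := by
  simp [mVal_eq_sum]

theorem mVal_submodule (M : Projectivization F V → ℕ) (P : Projectivization F V) :
    MVal M P.submodule = M P := by
  simp [mVal_eq_sum, submodule_le_submodule_iff, Finset.sum_filter]

theorem mVal_bot (M : Projectivization F V → ℕ) : MVal M ⊥ = 0 := by
  have (P : Projectivization F V) : P.submodule ≠ ⊥ := by
    simp [P.submodule_eq, P.rep_nonzero]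
  simp [mVal_eq_sum, this]

theorem mVal_mono (M : Projectivization F V → ℕ) (h : K ≤ L) : MVal M K ≤ MVal M L := by
  simp only [mVal_eq_sum]
  exact Finset.sum_le_sum_of_subset (Finset.monotone_filter_right _ fun _ _ hP => hP.trans h)

theorem mVal_add (M N : Projectivization F V → ℕ) (K : Submodule F V) :
    MVal (M + N) K = MVal M K + MVal N K := by
  simp [mVal_eq_sum, Finset.sum_add_distrib]

theorem mVal_single (P : Projectivization F V) (c : ℕ) (K : Submodule F V) :
    MVal (Pi.single P c) K = if P.submodule ≤ K then c else 0 := by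
  simp [mVal_eq_sum]

theorem mVal_eq_mVal_top_iff : MVal M K = MVal M ⊤ ↔ supportSpan M ≤ K := by
  rw [mVal_top, mVal_eq_sum, supportSpan_le_iff,
    ← Finset.sum_filter_add_sum_filter_not Finset.univ (fun P => P.submodule ≤ K), left_eq_add,
    Finset.sum_eq_zero_iff]
  simp only [Finset.mem_filter, Finset.mem_univ, true_and, pos_iff_ne_zero, ne_eq, not_imp_comm]

theorem mVal_ker_sub {f g : Dual F V} (hg : supportSpan M ≤ ker g) :
    MVal M (ker (f - g)) = MVal M (ker f) := by
  simp only [mVal_eq_sum, Finset.sum_filter]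
  refine Finset.sum_congr rfl fun P _ => ?_
  rcases Nat.eq_zero_or_pos (M P) with hP | hP
  · simp [hP]
  · have := submodule_le_ker_iff.mp (supportSpan_le_iff.mp hg P hP)
    simp [submodule_le_ker_iff, this]

theorem IsDivisible.modEq_ker (h : IsDivisible Δ M) (f : Dual F V) :
    MVal M (ker f) ≡ MVal M ⊤ [MOD Δ] := by
  rcases eq_or_ne f 0 with rfl | hf
  · rw [ker_zero]
  · exact h _ (Dual.finrank_ker_add_one_of_ne_zero hf)

theorem IsDivisible.mVal_ker_of_card_eq_eleven (hdiv : IsDivisible 4 M) (hcard : MVal M ⊤ = 11)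
    (f : Dual F V) :
    MVal M (ker f) = 11 ∨ MVal M (ker f) = 7 ∨ MVal M (ker f) = 3 := by
  have hmod := hdiv.modEq_ker f
  have hle := mVal_mono M (le_top (a := ker f))
  rw [hcard] at hmod hle
  unfold Nat.ModEq at hmod
  omega

theorem isDivisible_single (P : Projectivization F V) (c : ℕ) :
    IsDivisible c (Pi.single P c) := by
  intro H _
  rw [mVal_single, mVal_single, if_pos le_top]
  split_ifs
  · rfl
  · exact (Nat.modEq_zero_iff_dvd.mpr dvd_rfl).symm

theorem IsDivisible.of_add_right (h : IsDivisible Δ (M + N)) (hN : IsDivisible Δ N) :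
    IsDivisible Δ M := by
  intro H hH
  have hsum := h H hH
  rw [mVal_add, mVal_add] at hsum
  exact (hN H hH).add_right_cancel hsum

theorem sum_mul_card_le_ker (M : Projectivization F V → ℕ) (S : Finset (Dual F V)) :
    ∑ P, M P * #{f ∈ S | P.submodule ≤ ker f} = ∑ f ∈ S, MVal M (ker f) := by
  simp only [mVal_eq_sum, Finset.card_filter, Finset.mul_sum, mul_ite, mul_one, mul_zero,
    Finset.sum_filter]
  exact Finset.sum_comm

theorem sum_mul_card_le_ker_sq (M : Projectivization F V → ℕ) (S : Finset (Dual F V)) :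
    ∑ P, M P * #{f ∈ S | P.submodule ≤ ker f} ^ 2 =
      ∑ f ∈ S, ∑ g ∈ S, MVal M (ker f ⊓ ker g) := by
  have hsq (P : Projectivization F V) : #{f ∈ S | P.submodule ≤ ker f} ^ 2 =
      ∑ f ∈ S, ∑ g ∈ S, if P.submodule ≤ ker f ⊓ ker g then 1 else 0 := by
    rw [sq, Finset.card_filter, Finset.sum_mul_sum]
    simp only [le_inf_iff, ite_and, ite_mul, one_mul, zero_mul]
  simp only [hsq, mVal_eq_sum, Finset.mul_sum, mul_ite, mul_one, mul_zero, Finset.sum_filter]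
  rw [Finset.sum_comm]
  exact Finset.sum_congr rfl fun f _ => Finset.sum_comm

instance finite_dual [Finite F] : Finite (Dual F V) :=
  DFunLike.finite _

end FiniteGeometry

section StandardEquations

variable {F V : Type*} [Field F] [Fintype F] [AddCommGroup V] [Module F V] [Finite V]

theorem card_pow_finrank_mul_card_le_ker (K : Submodule F V) :
    Fintype.card F ^ finrank F K * #{f : Dual F V | K ≤ ker f} = Fintype.card (Dual F V) := by
  have hann : #{f : Dual F V | K ≤ ker f} = Fintype.card F ^ finrank F K.dualAnnihilator := by
    rw [← card_eq_pow_finrank (V := K.dualAnnihilator), Fintype.card_subtype]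
    simp only [Submodule.mem_dualAnnihilator, SetLike.le_def, mem_ker]
  rw [hann, ← pow_add, Subspace.finrank_add_finrank_dualAnnihilator_eq,
    card_eq_pow_finrank (K := F) (V := Dual F V), Subspace.dual_finrank_eq]

theorem card_pow_mul_sum_mVal_ker (M : Projectivization F V → ℕ) (K : Submodule F V) :
    Fintype.card F ^ (finrank F K + 1) * ∑ f : Dual F V with K ≤ ker f, MVal M (ker f) =
      Fintype.card (Dual F V) * (MVal M ⊤ + (Fintype.card F - 1) * MVal M K) := by
  set q := Fintype.card F
  have hcount (P : Projectivization F V) :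
      q ^ (finrank F K + 1) * #{f : Dual F V | K ≤ ker f ∧ P.submodule ≤ ker f} =
        Fintype.card (Dual F V) * (1 + (q - 1) * if P.submodule ≤ K then 1 else 0) := by
    simp only [← sup_le_iff]
    split_ifs with hP
    · rw [sup_eq_left.mpr hP, pow_succ, mul_right_comm, card_pow_finrank_mul_card_le_ker, mul_one,
        Nat.add_sub_cancel' Fintype.card_pos]
    · rw [← finrank_sup_submodule hP, card_pow_finrank_mul_card_le_ker, mul_zero, add_zero, mul_one]
  calc q ^ (finrank F K + 1) * ∑ f : Dual F V with K ≤ ker f, MVal M (ker f)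
      = ∑ P, M P * (q ^ (finrank F K + 1) *
          #{f : Dual F V | K ≤ ker f ∧ P.submodule ≤ ker f}) := by
        simp only [← sum_mul_card_le_ker, Finset.filter_filter, Finset.mul_sum, mul_left_comm]
    _ = ∑ P, Fintype.card (Dual F V) *
          (M P + (q - 1) * if P.submodule ≤ K then M P else 0) := by
        refine Finset.sum_congr rfl fun P _ => ?_
        rw [hcount]
        split_ifs <;> ring
    _ = Fintype.card (Dual F V) * (MVal M ⊤ + (q - 1) * MVal M K) := by
        rw [← Finset.mul_sum, Finset.sum_add_distrib, ← Finset.mul_sum, mVal_top, mVal_eq_sum,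
          Finset.sum_filter]

end StandardEquations

section Subspaces

variable {F V : Type*} [Field F] [Fintype F] [AddCommGroup V] [Module F V] [Finite V]
  {M : Projectivization F V → ℕ} {K : Submodule F V} {r : ℕ}

theorem gaussNum_lt_pow {q : ℕ} (hq : 2 ≤ q) (k : ℕ) : gaussNum q k < q ^ k :=
  Nat.geomSum_lt hq fun _ => Finset.mem_range.mp

theorem IsDivisible.mVal_ker_of_card_eq_gaussNum (hdiv : IsDivisible (Fintype.card F ^ r) M)
    (hcard : MVal M ⊤ = gaussNum (Fintype.card F) (r + 1)) (f : Dual F V) :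
    MVal M (ker f) = gaussNum (Fintype.card F) r +
      if supportSpan M ≤ ker f then Fintype.card F ^ r else 0 := by
  have hsucc : MVal M ⊤ = gaussNum (Fintype.card F) r + Fintype.card F ^ r := by
    rw [hcard, gaussNum, Finset.sum_range_succ, gaussNum]
  split_ifs with hf
  · rw [mVal_eq_mVal_top_iff.mpr hf, hsucc]
  · have hlt : MVal M (ker f) < MVal M ⊤ :=
      lt_of_le_of_ne (mVal_mono M le_top) (mt mVal_eq_mVal_top_iff.mp hf)
    have hgauss := gaussNum_lt_pow (Fintype.one_lt_card (α := F)) r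
    have hmod : MVal M (ker f) ≡ gaussNum (Fintype.card F) r [MOD Fintype.card F ^ r] := by
      simpa [hsucc, Nat.ModEq] using hdiv.modEq_ker f
    exact le_antisymm (hmod.le_of_lt_add (hsucc ▸ hlt))
      (hmod.symm.le_of_lt_add (hgauss.trans_le le_add_self))

theorem IsDivisible.pow_mul_card_supportSpan_le_ker (hdiv : IsDivisible (Fintype.card F ^ r) M)
    (hcard : MVal M ⊤ = gaussNum (Fintype.card F) (r + 1)) (hK : K ≤ supportSpan M) :
    Fintype.card F ^ (finrank F K + 1 + r) * #{f : Dual F V | supportSpan M ≤ ker f} =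
      Fintype.card (Dual F V) * (1 + (Fintype.card F - 1) * MVal M K) := by
  have hsum : ∑ f : Dual F V with K ≤ ker f, MVal M (ker f) =
      gaussNum (Fintype.card F) r * #{f : Dual F V | K ≤ ker f} +
        Fintype.card F ^ r * #{f : Dual F V | supportSpan M ≤ ker f} := by
    simp only [hdiv.mVal_ker_of_card_eq_gaussNum hcard, Finset.sum_add_distrib, Finset.sum_const,
      smul_eq_mul, ← Finset.sum_filter, Finset.filter_filter,
      and_iff_right_of_imp (fun h : supportSpan M ≤ _ => hK.trans h), mul_comm]
  have hstd := card_pow_mul_sum_mVal_ker M K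
  have hann := card_pow_finrank_mul_card_le_ker K
  have hgauss : MVal M ⊤ = Fintype.card F * gaussNum (Fintype.card F) r + 1 := by
    rw [hcard, gaussNum, geom_sum_succ, gaussNum]
  rw [hsum, hgauss] at hstd
  zify at hstd hann ⊢
  linear_combination hstd - (Fintype.card F * gaussNum (Fintype.card F) r : ℤ) * hann

theorem IsDivisible.finrank_supportSpan (hdiv : IsDivisible (Fintype.card F ^ r) M)
    (hcard : MVal M ⊤ = gaussNum (Fintype.card F) (r + 1)) :
    finrank F (supportSpan M) = r + 1 := by
  have hcount := hdiv.pow_mul_card_supportSpan_le_ker hcard (bot_le (a := supportSpan M))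
  rw [mVal_bot, mul_zero, add_zero, mul_one, finrank_bot, zero_add, add_comm,
    ← card_pow_finrank_mul_card_le_ker (supportSpan M)] at hcount
  have hpos : 0 < #{f : Dual F V | supportSpan M ≤ ker f} :=
    Finset.card_pos.mpr ⟨0, by simp⟩
  exact (Nat.pow_right_injective Fintype.one_lt_card
    (Nat.eq_of_mul_eq_mul_right hpos hcount)).symm

theorem IsDivisible.eq_indicator_supportSpan (hdiv : IsDivisible (Fintype.card F ^ r) M)
    (hcard : MVal M ⊤ = gaussNum (Fintype.card F) (r + 1)) (P : Projectivization F V) :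
    M P = if P.submodule ≤ supportSpan M then 1 else 0 := by
  split_ifs with hP
  · have hspan := card_pow_finrank_mul_card_le_ker (supportSpan M)
    have hcount := hdiv.pow_mul_card_supportSpan_le_ker hcard hP
    rw [hdiv.finrank_supportSpan hcard] at hspan
    rw [P.finrank_submodule, mVal_submodule, add_assoc, add_comm 1 r, pow_add, pow_one, mul_assoc,
      hspan, mul_comm] at hcount
    have hq : Fintype.card F = 1 + (Fintype.card F - 1) * M P :=
      Nat.eq_of_mul_eq_mul_left Fintype.card_pos hcount
    have hq' : 1 < Fintype.card F := Fintype.one_lt_card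
    exact Nat.eq_of_mul_eq_mul_left (Nat.sub_pos_of_lt hq') (by omega)
  · by_contra h
    exact hP (supportSpan_le_iff.mp le_rfl P (Nat.pos_of_ne_zero h))

end Subspaces

section HyperplaneMultiplicities

variable {F V : Type*} [Field F] [Finite F] [AddCommGroup V] [Module F V] [Finite V]
  {M : Projectivization F V → ℕ} {f : Dual F V} {i : ℕ}

/-- The functionals whose kernel has multiplicity `i` in `M`. For the linear code attached to `M`
these correspond to the codewords of weight `|M| - i`. -/
noncomputable def functionalsOfMult (M : Projectivization F V → ℕ) (i : ℕ) : Finset (Dual F V) :=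
  {f | MVal M (ker f) = i}

theorem mem_functionalsOfMult : f ∈ functionalsOfMult M i ↔ MVal M (ker f) = i := by
  simp [functionalsOfMult]

theorem sum_mul_card_functionalsOfMult_le_ker (M : Projectivization F V → ℕ) (i : ℕ) :
    ∑ P, M P * #{f ∈ functionalsOfMult M i | P.submodule ≤ ker f} =
      i * #(functionalsOfMult M i) := by
  rw [sum_mul_card_le_ker, Finset.sum_congr rfl fun f => mem_functionalsOfMult.mp,
    Finset.sum_const, smul_eq_mul, mul_comm]

theorem card_filter_sub_mem_functionalsOfMult_top (hf : f ∈ functionalsOfMult M i) :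
    #{g ∈ functionalsOfMult M i | f - g ∈ functionalsOfMult M (MVal M ⊤)} =
      #(functionalsOfMult M (MVal M ⊤)) := by
  have hsub {h : Dual F V} (hh : h ∈ functionalsOfMult M (MVal M ⊤)) :
      MVal M (ker (f - h)) = i := by
    rw [mVal_ker_sub (mVal_eq_mVal_top_iff.mp (mem_functionalsOfMult.mp hh)),
      mem_functionalsOfMult.mp hf]
  refine Finset.card_nbij' (f - ·) (f - ·) ?_ ?_ ?_ ?_
  · exact fun g hg => (Finset.mem_filter.mp hg).2
  · intro h hh
    simpa [mem_functionalsOfMult, hsub hh] using mem_functionalsOfMult.mp hh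
  all_goals exact fun h _ => sub_sub_cancel f h

end HyperplaneMultiplicities

section CardEqEleven

variable {F V : Type*} [Field F] [Fintype F] [AddCommGroup V] [Module F V] [Finite V]
  {M : Projectivization F V → ℕ} {K : Submodule F V} {f g : Dual F V}

theorem mVal_ker_add_mVal_ker_add_mVal_ker_sub (hF : Fintype.card F = 2) (f g : Dual F V) :
    MVal M (ker f) + MVal M (ker g) + MVal M (ker (f - g)) =
      MVal M ⊤ + 2 * MVal M (ker f ⊓ ker g) := by
  have hunique {a b : F} (ha : a ≠ 0) (hb : b ≠ 0) : a = b := by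
    have : Fintype.card Fˣ ≤ 1 := by rw [Fintype.card_units, hF]
    exact congrArg Units.val
      (Fintype.card_le_one_iff.mp this (Units.mk0 a ha) (Units.mk0 b hb))
  simp only [mVal_eq_sum, Finset.sum_filter, ← Finset.sum_add_distrib, Finset.mul_sum, le_top]
  refine Finset.sum_congr rfl fun P _ => ?_
  simp only [le_inf_iff, submodule_le_ker_iff, LinearMap.sub_apply, sub_eq_zero]
  by_cases hf : f P.rep = 0 <;> by_cases hg : g P.rep = 0
  · simp only [hf, hg, and_self, if_true]
    ring
  · simp [hf, hg, Ne.symm hg]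
  · simp [hf, hg]
  · simp [hg, hunique hf hg]

theorem IsDivisible.mVal_ker_inf_ker (hF : Fintype.card F = 2) (hdiv : IsDivisible 4 M)
    (hcard : MVal M ⊤ = 11) (hf : f ∈ functionalsOfMult M 3) (hg : g ∈ functionalsOfMult M 3) :
    MVal M (ker f ⊓ ker g) = 1 + 2 * if f - g ∈ functionalsOfMult M 11 then 1 else 0 := by
  have hpencil := mVal_ker_add_mVal_ker_add_mVal_ker_sub (M := M) hF f g
  have hsub := hdiv.mVal_ker_of_card_eq_eleven hcard (f - g)
  rw [mem_functionalsOfMult] at hf hg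
  simp only [mem_functionalsOfMult]
  split_ifs <;> omega

theorem IsDivisible.sum_sum_mVal_ker_inf_ker (hF : Fintype.card F = 2) (hdiv : IsDivisible 4 M)
    (hcard : MVal M ⊤ = 11) :
    ∑ f ∈ functionalsOfMult M 3, ∑ g ∈ functionalsOfMult M 3, MVal M (ker f ⊓ ker g) =
      #(functionalsOfMult M 3) *
        (#(functionalsOfMult M 3) + 2 * #(functionalsOfMult M 11)) := by
  rw [← smul_eq_mul, ← Finset.sum_const]
  refine Finset.sum_congr rfl fun f hf => ?_
  rw [Finset.sum_congr rfl fun g hg => hdiv.mVal_ker_inf_ker hF hcard hf hg,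
    Finset.sum_add_distrib, ← Finset.mul_sum, ← Finset.card_filter, ← Finset.card_eq_sum_ones,
    ← hcard, card_filter_sub_mem_functionalsOfMult_top hf]

theorem IsDivisible.two_pow_mul_card_le_ker_add (hF : Fintype.card F = 2) (hdiv : IsDivisible 4 M)
    (hcard : MVal M ⊤ = 11) (hK : K ≤ supportSpan M) :
    2 ^ (finrank F K + 3) * #{f ∈ functionalsOfMult M 3 | K ≤ ker f} +
        Fintype.card (Dual F V) * MVal M K =
      3 * Fintype.card (Dual F V) + 2 ^ (finrank F K + 3) * #(functionalsOfMult M 11) := by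
  have hker (f : Dual F V) : MVal M (ker f) + 4 * (if f ∈ functionalsOfMult M 3 then 1 else 0) =
      7 + 4 * if f ∈ functionalsOfMult M 11 then 1 else 0 := by
    have := hdiv.mVal_ker_of_card_eq_eleven hcard f
    simp only [mem_functionalsOfMult]
    split_ifs <;> omega
  have hle {f : Dual F V} (hf : f ∈ functionalsOfMult M 11) : K ≤ ker f :=
    hK.trans (mVal_eq_mVal_top_iff.mp (hcard ▸ mem_functionalsOfMult.mp hf))
  have hsum : ∑ f : Dual F V with K ≤ ker f, MVal M (ker f) +
      4 * #{f ∈ functionalsOfMult M 3 | K ≤ ker f} =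
      7 * #{f : Dual F V | K ≤ ker f} + 4 * #(functionalsOfMult M 11) := by
    have hfilter : #{f ∈ functionalsOfMult M 11 | K ≤ ker f} = #(functionalsOfMult M 11) := by
      rw [Finset.filter_true_of_mem fun f hf => hle hf]
    have hindicator (i : ℕ) : #{f ∈ functionalsOfMult M i | K ≤ ker f} =
        ∑ f : Dual F V with K ≤ ker f, if f ∈ functionalsOfMult M i then 1 else 0 := by
      simp only [← Finset.card_filter, functionalsOfMult, Finset.filter_filter, Finset.mem_filter,
        Finset.mem_univ, true_and, and_comm]
    rw [← hfilter, hindicator, hindicator, Finset.card_eq_sum_ones]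
    simp only [Finset.mul_sum, ← Finset.sum_add_distrib, mul_one]
    exact Finset.sum_congr rfl fun f _ => hker f
  have hstd := card_pow_mul_sum_mVal_ker M K
  have hann := card_pow_finrank_mul_card_le_ker K
  rw [hF, hcard] at hstd
  rw [hF] at hann
  zify at hstd hann hsum ⊢
  linear_combination 2 ^ (finrank F K + 1) * hsum - hstd + 14 * hann

theorem IsDivisible.sixteen_mul_card_le_ker_add (hF : Fintype.card F = 2) (hdiv : IsDivisible 4 M)
    (hcard : MVal M ⊤ = 11) {P : Projectivization F V} (hP : 0 < M P) :
    16 * #{f ∈ functionalsOfMult M 3 | P.submodule ≤ ker f} + Fintype.card (Dual F V) * M P =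
      3 * Fintype.card (Dual F V) + 16 * #(functionalsOfMult M 11) := by
  simpa [P.finrank_submodule, mVal_submodule] using
    hdiv.two_pow_mul_card_le_ker_add hF hcard (supportSpan_le_iff.mp le_rfl P hP)

theorem IsDivisible.eight_mul_card_functionalsOfMult_three (hF : Fintype.card F = 2)
    (hdiv : IsDivisible 4 M) (hcard : MVal M ⊤ = 11) :
    8 * #(functionalsOfMult M 3) =
      3 * Fintype.card (Dual F V) + 8 * #(functionalsOfMult M 11) := by
  simpa [mVal_bot] using hdiv.two_pow_mul_card_le_ker_add hF hcard (bot_le (a := supportSpan M))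

theorem IsDivisible.sum_sq_mul_card_le_ker (hF : Fintype.card F = 2)
    (hdiv : IsDivisible 4 M) (hcard : MVal M ⊤ = 11) :
    ∑ P, M P ^ 2 * #{f ∈ functionalsOfMult M 3 | P.submodule ≤ ker f} =
      ∑ P, M P * #{f ∈ functionalsOfMult M 3 | P.submodule ≤ ker f} := by
  set A := #(functionalsOfMult M 3)
  set B := fun P : Projectivization F V => #{f ∈ functionalsOfMult M 3 | P.submodule ≤ ker f}
  set a := #(functionalsOfMult M 11)
  set N := Fintype.card (Dual F V)
  have hfirst : ∑ P, M P * B P = 3 * A := sum_mul_card_functionalsOfMult_le_ker M 3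
  have hsecond : ∑ P, M P * B P ^ 2 = A * (A + 2 * a) := by
    rw [sum_mul_card_le_ker_sq, hdiv.sum_sum_mVal_ker_inf_ker hF hcard]
  have hpoint (P : Projectivization F V) :
      16 * (M P * B P ^ 2) + N * (M P ^ 2 * B P) = (3 * N + 16 * a) * (M P * B P) := by
    rcases Nat.eq_zero_or_pos (M P) with hP | hP
    · simp [hP]
    · rw [← hdiv.sixteen_mul_card_le_ker_add hF hcard hP]
      ring
  have hsum : 16 * (A * (A + 2 * a)) + N * ∑ P, M P ^ 2 * B P = (3 * N + 16 * a) * (3 * A) := by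
    rw [← hsecond, ← hfirst, Finset.mul_sum, Finset.mul_sum, Finset.mul_sum,
      ← Finset.sum_add_distrib]
    exact Finset.sum_congr rfl fun P _ => hpoint P
  have hA : 8 * A = 3 * N + 8 * a := hdiv.eight_mul_card_functionalsOfMult_three hF hcard
  refine Nat.eq_of_mul_eq_mul_left (Fintype.card_pos : 0 < N) ?_
  rw [hfirst]
  zify at hsum hA ⊢
  linear_combination hsum - 2 * A * hA

theorem IsDivisible.eq_one_of_forall_lt_four (hF : Fintype.card F = 2) (hdiv : IsDivisible 4 M)
    (hcard : MVal M ⊤ = 11) (hlt : ∀ P, M P < 4) {P : Projectivization F V} (hP : 0 < M P) :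
    M P = 1 := by
  have hle (Q : Projectivization F V) :
      M Q * #{f ∈ functionalsOfMult M 3 | Q.submodule ≤ ker f} ≤
        M Q ^ 2 * #{f ∈ functionalsOfMult M 3 | Q.submodule ≤ ker f} :=
    Nat.mul_le_mul_right _ (Nat.le_self_pow two_ne_zero _)
  have hsq := (Finset.sum_eq_sum_iff_of_le fun Q _ => hle Q).mp
    (hdiv.sum_sq_mul_card_le_ker hF hcard).symm P (Finset.mem_univ P)
  have hpos : 0 < #{f ∈ functionalsOfMult M 3 | P.submodule ≤ ker f} := by
    have hzero : 0 < #(functionalsOfMult M 11) :=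
      Finset.card_pos.mpr ⟨0, by simp [mem_functionalsOfMult, hcard]⟩
    have hpoint := hdiv.sixteen_mul_card_le_ker_add hF hcard hP
    have := Nat.mul_le_mul_left (Fintype.card (Dual F V)) (Nat.le_of_lt_succ (hlt P))
    omega
  refine Nat.eq_of_mul_eq_mul_left hP ?_
  rw [mul_one, ← sq]
  exact (Nat.eq_of_mul_eq_mul_right hpos hsq).symm

theorem IsDivisible.exists_four_le (hF : Fintype.card F = 2) (hdiv : IsDivisible 4 M)
    (hcard : MVal M ⊤ = 11) : ∃ P, 4 ≤ M P := by
  by_contra! hlt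
  have hpoint (P : Projectivization F V) :
      16 * (M P * #{f ∈ functionalsOfMult M 3 | P.submodule ≤ ker f}) +
          Fintype.card (Dual F V) * M P =
        (3 * Fintype.card (Dual F V) + 16 * #(functionalsOfMult M 11)) * M P := by
    rcases Nat.eq_zero_or_pos (M P) with hP | hP
    · simp [hP]
    · have hone : M P = 1 := hdiv.eq_one_of_forall_lt_four hF hcard hlt hP
      simpa [hone] using hdiv.sixteen_mul_card_le_ker_add hF hcard hP
  have hsum := Finset.sum_congr (rfl : Finset.univ = Finset.univ) fun P _ => hpoint P
  have hA := hdiv.eight_mul_card_functionalsOfMult_three hF hcard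
  have hN : 0 < Fintype.card (Dual F V) := Fintype.card_pos
  rw [Finset.sum_add_distrib, ← Finset.mul_sum, ← Finset.mul_sum, ← Finset.mul_sum,
    ← mVal_top M, hcard, sum_mul_card_functionalsOfMult_le_ker] at hsum
  omega

end CardEqEleven

theorem stmt_8_general {F V : Type*} [Field F] [Fintype F] [AddCommGroup V] [Module F V]
    [Finite V] (hF : Fintype.card F = 2) (M : Projectivization F V → ℕ)
    (hdiv : IsDivisible 4 M) (hcard : MVal M ⊤ = 11) :
    (∃ (E : Submodule F V) (P : Projectivization F V), finrank F E = 3 ∧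
      ∀ Q, M Q = (if Q.submodule ≤ E then 1 else 0) + (if Q = P then 4 else 0)) ∧
    (∃ P, 4 ≤ M P) := by
  obtain ⟨P, hP⟩ := hdiv.exists_four_le hF hcard
  have hle : Pi.single P 4 ≤ M := update_le_iff.mpr ⟨hP, fun _ _ => Nat.zero_le _⟩
  obtain ⟨M', rfl⟩ : ∃ M', M = M' + Pi.single P 4 :=
    ⟨M - Pi.single P 4, (tsub_add_cancel_of_le hle).symm⟩
  have hdiv' : IsDivisible (Fintype.card F ^ 2) M' := by
    rw [hF]
    exact hdiv.of_add_right (isDivisible_single P 4)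
  have hcard' : MVal M' ⊤ = gaussNum (Fintype.card F) (2 + 1) := by
    rw [mVal_add, mVal_single, if_pos le_top] at hcard
    rw [hF, Nat.add_right_cancel hcard]
    rfl
  refine ⟨⟨supportSpan M', P, hdiv'.finrank_supportSpan hcard', fun Q => ?_⟩, P, hP⟩
  rw [Pi.add_apply, Pi.single_apply, ← hdiv'.eq_indicator_supportSpan hcard' Q]

theorem stmt_8 (v : ℕ) (M : Projectivization (ZMod 2) (Fin v → ZMod 2) → ℕ)
    (hdiv : IsDivisible 4 M) (hcard : MVal M ⊤ = 11) :
    (∃ (E : Submodule (ZMod 2) (Fin v → ZMod 2))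
        (P : Projectivization (ZMod 2) (Fin v → ZMod 2)),
      Module.finrank (ZMod 2) E = 3 ∧
      ∀ Q, M Q = (if Q.submodule ≤ E then 1 else 0) + (if Q = P then 4 else 0)) ∧
    (∃ P, 4 ≤ M P) :=
  stmt_8_general (ZMod.card 2) M hdiv hcard
end
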